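/- Let G be a group acting acylindrically and by isometries on a geodesic δ-hyperbolic metric space S. Then every pair of distinct points of the Gromov boundary ∂S satisfies condition (C3) for the induced action of G on ∂S. -/

import Mathlib

/-!
The boundary is handled through sequences in `S` and Gromov products, using the four-point
inequality derived from slim triangles (`fourPoint_of_hyperbolic`), with defect `D`.

Let `u, v` be points of `S` far out towards `x, y`; their product `(u·v)_e` is bounded by a
constant `K` that does not depend on how far out they are. Neighbourhoods `U, V` are chosen so that
their points have product with `u`, resp. `v`, larger than a threshold `T` that depends only on
`K`, `D` and the acylindricity constant `R` belonging to a displacement bound computed from `K`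
and `D`.

Given `p ≠ q` and `r ≠ s`, take approximating points `P, Q, R', Q'` of `S` and neighbourhoods
`A, B, C, E` whose points are very close to them. Suppose `g` maps some `a ∈ A`, `b ∈ B` into `U`
and some `c ∈ C`, `d ∈ E` into `V`. Seen from `e`, each of `ga, gb` is separated from each of
`gc, gd`, whereas seen from `ge` the two pairs `ga, gb` and `gc, gd` have bounded products. This
bounds `d(e, ge)` (`dist_le_of_four`), so the change of base point is harmless and `gP`, `gR'`
themselves lie in the directions of `u` and `v` (`replace_points`).

It remains to see that only finitely many `g` send the fixed points `P, R'` towards `u, v`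
(`finite_pair`). For such `g`, the point `e` is within a constant of `g[P, R']`, hence of `gz` for
one of finitely many `z ∈ [P, R']`. For fixed `z`, any two such elements move the initial segment
of `[z, P]` of length `R` to nearby positions, so they differ by an element that almost fixes both
ends of that segment; acylindricity gives finiteness (`finite_near`).
-/

/-- A geodesic segment from `u` to `v`: the image of an isometric embedding of
`[0, dist u v]` sending the endpoints to `u` and `v`. -/
def IsGeodesicSegment {S : Type*} [MetricSpace S] (Γ : Set S) (u v : S) : Prop :=
  ∃ γ : ℝ → S, γ 0 = u ∧ γ (dist u v) = v ∧
    (∀ s ∈ Set.Icc (0 : ℝ) (dist u v), ∀ t ∈ Set.Icc (0 : ℝ) (dist u v),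
      dist (γ s) (γ t) = |s - t|) ∧
    Γ = γ '' Set.Icc (0 : ℝ) (dist u v)

/-- A geodesic metric space: every pair of points is joined by a geodesic segment. -/
def GeodesicSpace (S : Type*) [MetricSpace S] : Prop :=
  ∀ u v : S, ∃ Γ : Set S, IsGeodesicSegment Γ u v

/-- `δ`-hyperbolicity: every geodesic triangle is `δ`-slim. -/
def DeltaHyperbolic (S : Type*) [MetricSpace S] (δ : ℝ) : Prop :=
  ∀ x y z : S, ∀ Γ₁ Γ₂ Γ₃ : Set S,
    IsGeodesicSegment Γ₁ x y → IsGeodesicSegment Γ₂ y z → IsGeodesicSegment Γ₃ z x →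
    ∀ p ∈ Γ₁, Metric.infDist p (Γ₂ ∪ Γ₃) ≤ δ

/-- A (left) action of a group `G` on a set `M`, given as a plain function. -/
def IsAction {G M : Type*} [Group G] (act : G → M → M) : Prop :=
  (∀ x : M, act 1 x = x) ∧ ∀ (g h : G) (x : M), act (g * h) x = act g (act h x)

/-- An action by homeomorphisms on a topological space. -/
def IsActionByHomeos {G M : Type*} [Group G] [TopologicalSpace M] (act : G → M → M) : Prop :=
  IsAction act ∧ ∀ g : G, Continuous (act g)

/-- An action by isometries on a metric space. -/
def IsIsometricAction {G S : Type*} [Group G] [MetricSpace S] (act : G → S → S) : Prop :=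
  IsAction act ∧ ∀ g : G, Isometry (act g)

theorem IsAction.injective {G M : Type*} [Group G] {act : G → M → M}
    (h : IsAction act) (g : G) : Function.Injective (act g) := by
  intro a b hab
  have h2 := congrArg (act g⁻¹) hab
  rw [← h.2 g⁻¹ g a, ← h.2 g⁻¹ g b, inv_mul_cancel, h.1, h.1] at h2
  exact h2

/-- The Gromov product of `x` and `y` with respect to the basepoint `e`. -/
noncomputable def gprod {S : Type*} [MetricSpace S] (e x y : S) : ℝ :=
  (dist x e + dist y e - dist x y) / 2

/-- A sequence converges to infinity if its pairwise Gromov products tend to infinity. -/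
def ConvToInfty {S : Type*} [MetricSpace S] (e : S) (s : ℕ → S) : Prop :=
  Filter.Tendsto (fun p : ℕ × ℕ => gprod e (s p.1) (s p.2)) Filter.atTop Filter.atTop

/-- The type of sequences in `S` converging to infinity. -/
def BSeq (S : Type*) [MetricSpace S] (e : S) := {s : ℕ → S // ConvToInfty e s}

/-- Two sequences converging to infinity are equivalent if their mutual Gromov
products tend to infinity. -/
def bequiv {S : Type*} [MetricSpace S] (e : S) (s t : BSeq S e) : Prop :=
  Filter.Tendsto (fun n => gprod e (s.1 n) (t.1 n)) Filter.atTop Filter.atTop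

/-- The Gromov boundary of `S` with respect to the basepoint `e`. -/
def GBoundary (S : Type*) [MetricSpace S] (e : S) := Quot (bequiv (S := S) e)

/-- A sequence in `S` tends to the boundary point `x`. -/
def TendstoBd {S : Type*} [MetricSpace S] (e : S) (s : ℕ → S) (x : GBoundary S e) : Prop :=
  ∃ h : ConvToInfty e s, Quot.mk _ (⟨s, h⟩ : BSeq S e) = x

/-- The Gromov product of a point `u ∈ S` with a boundary point `x`:
the infimum over sequences tending to `x` of the liminf of Gromov products. -/
noncomputable def gprodSB {S : Type*} [MetricSpace S] (e u : S) (x : GBoundary S e) : EReal :=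
  sInf {r : EReal | ∃ s : ℕ → S, TendstoBd e s x ∧
    r = Filter.liminf (fun n => (gprod e u (s n) : EReal)) Filter.atTop}

/-- The Gromov product of two boundary points. -/
noncomputable def gprodBB {S : Type*} [MetricSpace S] (e : S) (x y : GBoundary S e) : EReal :=
  sInf {r : EReal | ∃ s t : ℕ → S, TendstoBd e s x ∧ TendstoBd e t y ∧
    r = Filter.liminf (fun p : ℕ × ℕ => (gprod e (s p.1) (t p.2) : EReal)) Filter.atTop}

/-- `UK e K x = {s ∈ S | (x·s)_e > K}`. -/
def UK {S : Type*} [MetricSpace S] (e : S) (K : ℝ) (x : GBoundary S e) : Set S :=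
  {u : S | (K : EReal) < gprodSB e u x}

/-- `d'(x,y) = exp (−ζ (x·y)_e)` on the boundary (equal to `0` when the product is `∞`). -/
noncomputable def dExp {S : Type*} [MetricSpace S] (e : S) (ζ : ℝ) (x y : GBoundary S e) : ℝ :=
  if gprodBB e x y = ⊤ then 0 else Real.exp (-ζ * (gprodBB e x y).toReal)

/-- The chain metric `ρ(x,y) = inf Σ d'(s_k, s_{k+1})` over finite chains from `x` to `y`. -/
noncomputable def rhoChain {S : Type*} [MetricSpace S] (e : S) (ζ : ℝ)
    (x y : GBoundary S e) : ℝ :=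
  sInf {r : ℝ | ∃ (n : ℕ) (c : ℕ → GBoundary S e), c 0 = x ∧ c n = y ∧
    r = ∑ k ∈ Finset.range n, dExp e ζ (c k) (c (k + 1))}

/-- `ρ` is a metric. -/
def IsMetricFn {B : Type*} (ρ : B → B → ℝ) : Prop :=
  (∀ x y, 0 ≤ ρ x y) ∧ (∀ x y, ρ x y = 0 ↔ x = y) ∧ (∀ x y, ρ x y = ρ y x) ∧
  ∀ x y z, ρ x z ≤ ρ x y + ρ y z

/-- `ζ` is a suitable visual parameter: `ζ > 0`, the associated chain function `ρ` is a
metric on the boundary, and `d'/2 ≤ ρ ≤ d'`. -/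
def VisualParam {S : Type*} [MetricSpace S] (e : S) (ζ : ℝ) : Prop :=
  0 < ζ ∧ IsMetricFn (rhoChain e ζ) ∧
  ∀ x y : GBoundary S e, dExp e ζ x y / 2 ≤ rhoChain e ζ x y ∧ rhoChain e ζ x y ≤ dExp e ζ x y

/-- The topology on the Gromov boundary induced by the visual metric `ρ`. -/
noncomputable def bdTopology (S : Type*) [MetricSpace S] (e : S) (ζ : ℝ) :
    TopologicalSpace (GBoundary S e) :=
  TopologicalSpace.generateFrom
    {B | ∃ (x : GBoundary S e) (ε : ℝ), 0 < ε ∧ B = {y | rhoChain e ζ x y < ε}}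

theorem gprod_comp_ge {S : Type*} [MetricSpace S] (e : S) {f : S → S} (hf : Isometry f)
    (a b : S) : gprod e a b - dist (f e) e ≤ gprod e (f a) (f b) := by
  have h1 : dist a e - dist (f e) e ≤ dist (f a) e := by
    have h := dist_triangle (f a) e (f e)
    rw [hf.dist_eq] at h
    have hc := dist_comm e (f e)
    linarith
  have h2 : dist b e - dist (f e) e ≤ dist (f b) e := by
    have h := dist_triangle (f b) e (f e)
    rw [hf.dist_eq] at h
    have hc := dist_comm e (f e)
    linarith
  have h3 : dist (f a) (f b) = dist a b := hf.dist_eq a b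
  simp only [gprod, h3]; linarith

theorem ConvToInfty.comp {S : Type*} [MetricSpace S] {e : S} {f : S → S} (hf : Isometry f)
    {s : ℕ → S} (hs : ConvToInfty e s) : ConvToInfty e (fun n => f (s n)) := by
  have h : Filter.Tendsto (fun p : ℕ × ℕ => gprod e (s p.1) (s p.2) + -dist (f e) e)
      Filter.atTop Filter.atTop := Filter.tendsto_atTop_add_const_right _ _ hs
  refine Filter.tendsto_atTop_mono (fun p => ?_) h
  have := gprod_comp_ge e hf (s p.1) (s p.2)
  simpa [sub_eq_add_neg] using this

/-- The map induced on the Gromov boundary by an isometry of `S`. -/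
def bdMap {S : Type*} [MetricSpace S] (e : S) (f : S → S) (hf : Isometry f) :
    GBoundary S e → GBoundary S e :=
  Quot.map (fun s : BSeq S e => (⟨fun n => f (s.1 n), s.2.comp hf⟩ : BSeq S e))
    (by
      intro s t h
      have h' : Filter.Tendsto (fun n => gprod e (s.1 n) (t.1 n) + -dist (f e) e)
          Filter.atTop Filter.atTop := Filter.tendsto_atTop_add_const_right _ _ h
      refine Filter.tendsto_atTop_mono (fun n => ?_) h'
      have := gprod_comp_ge e hf (s.1 n) (t.1 n)
      simpa [sub_eq_add_neg] using this)

/-- The induced map on pairs. -/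
def pairMap {M : Type*} (f : M → M) (p : M × M) : M × M := (f p.1, f p.2)

/-- Condition (C) for an action on a topological space. -/
def ConditionC {G M : Type*} [TopologicalSpace M] (act : G → M → M) : Prop :=
  ∀ u v : M × M, u.1 = u.2 → v.1 = v.2 → u ≠ v →
    ∃ U V : Set (M × M), IsOpen U ∧ IsOpen V ∧ u ∈ U ∧ v ∈ V ∧
      ∀ a b : M × M, a.1 ≠ a.2 → b.1 ≠ b.2 → a ≠ b →
        ∃ A B : Set (M × M), IsOpen A ∧ IsOpen B ∧ a ∈ A ∧ b ∈ B ∧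
          {g : G | (pairMap (act g) '' A ∩ U).Nonempty ∧
            (pairMap (act g) '' B ∩ V).Nonempty}.Finite

/-- Condition (C₁) for a pair of open sets `U, V`. -/
def CondC1 {G M : Type*} [TopologicalSpace M] (act : G → M → M) (U V : Set M) : Prop :=
  ∀ p q : M, p ≠ q →
    ∃ A B : Set M, IsOpen A ∧ IsOpen B ∧ p ∈ A ∧ q ∈ B ∧
      {g : G | (act g '' A ∩ U).Nonempty ∧ (act g '' A ∩ V).Nonempty ∧
        (act g '' B ∩ U).Nonempty ∧ (act g '' B ∩ V).Nonempty}.Finite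

/-- Condition (C₂) for a pair of open sets `U, V`. -/
def CondC2 {G M : Type*} [TopologicalSpace M] (act : G → M → M) (U V : Set M) : Prop :=
  ∀ p q r : M, p ≠ q → q ≠ r → p ≠ r →
    ∃ A B C : Set M, IsOpen A ∧ IsOpen B ∧ IsOpen C ∧ p ∈ A ∧ q ∈ B ∧ r ∈ C ∧
      {g : G | (act g '' A ∩ U).Nonempty ∧ (act g '' B ∩ V).Nonempty ∧
        (act g '' C ∩ U).Nonempty ∧ (act g '' C ∩ V).Nonempty}.Finite

/-- Condition (C₃) for a pair of open sets `U, V`. -/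
def CondC3 {G M : Type*} [TopologicalSpace M] (act : G → M → M) (U V : Set M) : Prop :=
  ∀ p q r s : M, p ≠ q → p ≠ r → p ≠ s → q ≠ r → q ≠ s → r ≠ s →
    ∃ A B C D : Set M, IsOpen A ∧ IsOpen B ∧ IsOpen C ∧ IsOpen D ∧
      p ∈ A ∧ q ∈ B ∧ r ∈ C ∧ s ∈ D ∧
      {g : G | (act g '' A ∩ U).Nonempty ∧ (act g '' B ∩ U).Nonempty ∧
        (act g '' C ∩ V).Nonempty ∧ (act g '' D ∩ V).Nonempty}.Finite

/-- Two points `x, y` satisfy (C₁): some open sets `U ∋ x`, `V ∋ y` satisfy (C₁). -/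
def PairC1 {G M : Type*} [TopologicalSpace M] (act : G → M → M) (x y : M) : Prop :=
  ∃ U V : Set M, IsOpen U ∧ IsOpen V ∧ x ∈ U ∧ y ∈ V ∧ CondC1 (G := G) act U V

/-- Two points `x, y` satisfy (C₂). -/
def PairC2 {G M : Type*} [TopologicalSpace M] (act : G → M → M) (x y : M) : Prop :=
  ∃ U V : Set M, IsOpen U ∧ IsOpen V ∧ x ∈ U ∧ y ∈ V ∧ CondC2 (G := G) act U V

/-- Two points `x, y` satisfy (C₃). -/
def PairC3 {G M : Type*} [TopologicalSpace M] (act : G → M → M) (x y : M) : Prop :=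
  ∃ U V : Set M, IsOpen U ∧ IsOpen V ∧ x ∈ U ∧ y ∈ V ∧ CondC3 (G := G) act U V

/-- `g` has north–south dynamics on `M` with fixed points `x ≠ y`. -/
def NorthSouthAt {G M : Type*} [Group G] [TopologicalSpace M] (act : G → M → M)
    (g : G) (x y : M) : Prop :=
  x ≠ y ∧ (∀ z : M, act g z = z ↔ z = x ∨ z = y) ∧
  ∀ U V : Set M, IsOpen U → IsOpen V → x ∈ U → y ∈ V →
    ∃ N : ℕ, ∀ n : ℕ, N < n → act (g ^ n) '' Uᶜ ⊆ V

/-- `g` has north–south dynamics on `M`. -/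
def NorthSouth {G M : Type*} [Group G] [TopologicalSpace M] (act : G → M → M) (g : G) : Prop :=
  ∃ x y : M, NorthSouthAt act g x y

/-- A completely Hausdorff space: distinct points are separated by open sets with
disjoint closures. -/
def CompletelyHausdorff (M : Type*) [TopologicalSpace M] : Prop :=
  ∀ u v : M, u ≠ v → ∃ U V : Set M, IsOpen U ∧ IsOpen V ∧ u ∈ U ∧ v ∈ V ∧
    closure U ∩ closure V = ∅

/-- An acylindrical action on a metric space. -/
def AcylindricalAction {G S : Type*} [Group G] [MetricSpace S] (act : G → S → S) : Prop :=
  ∀ ε : ℝ, 0 < ε → ∃ (R : ℝ) (N : ℕ), 0 < R ∧ 0 < N ∧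
    ∀ x y : S, R ≤ dist x y →
      {g : G | dist x (act g x) ≤ ε ∧ dist y (act g y) ≤ ε}.Finite ∧
      {g : G | dist x (act g x) ≤ ε ∧ dist y (act g y) ≤ ε}.ncard ≤ N

/-- The limit set of the action of `G` on the boundary of `S`. -/
def limitSet {G S : Type*} [Group G] [MetricSpace S] (act : G → S → S) (e : S) :
    Set (GBoundary S e) :=
  {x | ∃ (s : S) (gs : ℕ → G), TendstoBd e (fun n => act (gs n) s) x}

/-- The action is non-elementary: the limit set has at least 3 points. -/
def NonelemAction {G S : Type*} [Group G] [MetricSpace S] (act : G → S → S) (e : S) : Prop :=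
  ∃ x y z : GBoundary S e, x ∈ limitSet act e ∧ y ∈ limitSet act e ∧ z ∈ limitSet act e ∧
    x ≠ y ∧ y ≠ z ∧ x ≠ z

/-- A group is acylindrically hyperbolic if it admits a non-elementary acylindrical
isometric action on a geodesic Gromov hyperbolic space. -/
def AcylindricallyHyperbolic (G : Type*) [Group G] : Prop :=
  ∃ (S : Type) (_i : MetricSpace S) (act : G → S → S) (δ : ℝ),
    0 ≤ δ ∧ GeodesicSpace S ∧ DeltaHyperbolic S δ ∧ IsIsometricAction act ∧
    AcylindricalAction act ∧ ∃ e : S, NonelemAction act e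

/-- A group is virtually cyclic if it has a cyclic subgroup of finite index. -/
def VirtuallyCyclic (G : Type*) [Group G] : Prop :=
  ∃ H : Subgroup G, IsCyclic H ∧ H.index ≠ 0

/-! ### Geodesics and the four-point inequality -/

theorem gprod_comm {S : Type*} [MetricSpace S] (e a b : S) : gprod e a b = gprod e b a := by
  simp only [gprod, dist_comm a b]; ring

theorem gprod_isometry {S : Type*} [MetricSpace S] {f : S → S} (hf : Isometry f) (e a b : S) :
    gprod (f e) (f a) (f b) = gprod e a b := by
  simp only [gprod, hf.dist_eq]

theorem gprod_le_dist {S : Type*} [MetricSpace S] (e a b : S) : gprod e a b ≤ dist a e := by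
  have := dist_triangle b a e
  rw [dist_comm b a] at this
  simp only [gprod]; linarith

theorem IsGeodesicSegment.dist_add {S : Type*} [MetricSpace S] {Γ : Set S} {u v p : S}
    (h : IsGeodesicSegment Γ u v) (hp : p ∈ Γ) : dist u p + dist p v = dist u v := by
  obtain ⟨γ, h0, h1, hi, rfl⟩ := h
  obtain ⟨t, ht, rfl⟩ := hp
  have hm0 : (0 : ℝ) ∈ Set.Icc (0 : ℝ) (dist u v) := ⟨le_rfl, dist_nonneg⟩
  have hm1 : dist u v ∈ Set.Icc (0 : ℝ) (dist u v) := ⟨dist_nonneg, le_rfl⟩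
  have a := hi 0 hm0 t ht
  have b := hi t ht _ hm1
  rw [h0, zero_sub, abs_neg, abs_of_nonneg ht.1] at a
  rw [h1, abs_of_nonpos (by linarith [ht.2])] at b
  linarith

theorem IsGeodesicSegment.left_mem {S : Type*} [MetricSpace S] {Γ : Set S} {u v : S}
    (h : IsGeodesicSegment Γ u v) : u ∈ Γ := by
  obtain ⟨γ, h0, h1, hi, rfl⟩ := h
  exact ⟨0, ⟨le_rfl, dist_nonneg⟩, h0⟩

theorem IsGeodesicSegment.right_mem {S : Type*} [MetricSpace S] {Γ : Set S} {u v : S}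
    (h : IsGeodesicSegment Γ u v) : v ∈ Γ := by
  obtain ⟨γ, h0, h1, hi, rfl⟩ := h
  exact ⟨_, ⟨dist_nonneg, le_rfl⟩, h1⟩

theorem IsGeodesicSegment.isCompact_isPreconnected {S : Type*} [MetricSpace S] {Γ : Set S}
    {u v : S} (h : IsGeodesicSegment Γ u v) : IsCompact Γ ∧ IsPreconnected Γ := by
  obtain ⟨γ, h0, h1, hi, rfl⟩ := h
  have hc : ContinuousOn γ (Set.Icc (0 : ℝ) (dist u v)) := by
    have hl : LipschitzOnWith 1 γ (Set.Icc (0 : ℝ) (dist u v)) := by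
      apply LipschitzOnWith.of_dist_le_mul
      intro s hs t ht
      rw [hi s hs t ht, Real.dist_eq]; simp
    exact hl.continuousOn
  exact ⟨isCompact_Icc.image_of_continuousOn hc, isPreconnected_Icc.image _ hc⟩

/-- In a geodesic triangle, each point of a side has a point of another side at distance less
than `δ + 1`; the slack makes up for infimum distances that need not be attained. -/
theorem DeltaHyperbolic.exists_near {S : Type*} [MetricSpace S] {δ : ℝ}
    (hhyp : DeltaHyperbolic S δ) {x y z : S} {Γ₁ Γ₂ Γ₃ : Set S}
    (h₁ : IsGeodesicSegment Γ₁ x y) (h₂ : IsGeodesicSegment Γ₂ y z)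
    (h₃ : IsGeodesicSegment Γ₃ z x) {p : S} (hp : p ∈ Γ₁) :
    ∃ q ∈ Γ₂ ∪ Γ₃, dist p q < δ + 1 := by
  have h := hhyp x y z Γ₁ Γ₂ Γ₃ h₁ h₂ h₃ p hp
  exact (Metric.infDist_lt_iff ⟨y, Or.inl h₂.left_mem⟩).1 (by linarith)

/-- The distance from `w` to a geodesic `[x, y]` exceeds the Gromov product by a bounded amount.
By connectedness, some point of `[x, y]` is close to both other sides of the triangle; that point
is the one that realizes the bound. -/
theorem exists_mem_dist_le {S : Type*} [MetricSpace S] {δ : ℝ} (hδ : 0 ≤ δ)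
    (hgeo : GeodesicSpace S) (hhyp : DeltaHyperbolic S δ) (w x y : S) {Γ : Set S}
    (hΓ : IsGeodesicSegment Γ x y) : ∃ p ∈ Γ, dist w p ≤ gprod w x y + 2 * (δ + 2) := by
  obtain ⟨Γ₂, h₂⟩ := hgeo y w
  obtain ⟨Γ₃, h₃⟩ := hgeo w x
  have hcl : ∀ A : Set S, IsClosed {p : S | Metric.infDist p A ≤ δ + 1} := fun A =>
    isClosed_le (Metric.continuous_infDist_pt A) continuous_const
  have hcov : Γ ⊆ {p : S | Metric.infDist p Γ₂ ≤ δ + 1} ∪ {p : S | Metric.infDist p Γ₃ ≤ δ + 1} := by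
    intro p hp
    obtain ⟨q, hq | hq, hd⟩ := hhyp.exists_near hΓ h₂ h₃ hp
    · exact Or.inl ((Metric.infDist_le_dist_of_mem hq).trans hd.le)
    · exact Or.inr ((Metric.infDist_le_dist_of_mem hq).trans hd.le)
  obtain ⟨p, hp, hp2, hp3⟩ := isPreconnected_closed_iff.1 hΓ.isCompact_isPreconnected.2 _ _
    (hcl Γ₂) (hcl Γ₃) hcov
    ⟨y, hΓ.right_mem, by
      simp only [Set.mem_ofPred_eq, Metric.infDist_zero_of_mem h₂.left_mem]; linarith⟩
    ⟨x, hΓ.left_mem, by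
      simp only [Set.mem_ofPred_eq, Metric.infDist_zero_of_mem h₃.right_mem]; linarith⟩
  simp only [Set.mem_ofPred_eq] at hp2 hp3
  obtain ⟨a, ha, hpa⟩ := (Metric.infDist_lt_iff (r := δ + 2) ⟨y, h₂.left_mem⟩).1 (by linarith)
  obtain ⟨b, hb, hpb⟩ := (Metric.infDist_lt_iff (r := δ + 2) ⟨w, h₃.left_mem⟩).1 (by linarith)
  refine ⟨p, hp, ?_⟩
  have e1 := hΓ.dist_add hp
  have e2 := h₂.dist_add ha
  have e3 := h₃.dist_add hb
  have t1 := dist_triangle w b p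
  have t2 := dist_triangle p b x
  have t3 := dist_triangle w a p
  have t4 := dist_triangle p a y
  simp only [gprod]
  rw [dist_comm b p] at t1
  rw [dist_comm a p, dist_comm w a] at t3
  rw [dist_comm p x] at t2
  rw [dist_comm a y] at t4
  rw [dist_comm w x] at e3
  linarith

theorem gprod_le_of_mem {S : Type*} [MetricSpace S] {Γ : Set S} {x y p : S} (w : S)
    (hΓ : IsGeodesicSegment Γ x y) (hp : p ∈ Γ) : gprod w x y ≤ dist w p := by
  have e1 := hΓ.dist_add hp
  have t1 := dist_triangle x p w
  have t2 := dist_triangle y p w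
  rw [dist_comm p w] at t1 t2
  rw [dist_comm y p] at t2
  simp only [gprod]; linarith

/-- The four-point inequality for Gromov products, with defect `D`. -/
def FourPoint (S : Type*) [MetricSpace S] (D : ℝ) : Prop :=
  ∀ w x y z : S, min (gprod w x y) (gprod w y z) - D ≤ gprod w x z

theorem fourPoint_of_hyperbolic {S : Type*} [MetricSpace S] {δ : ℝ} (hδ : 0 ≤ δ)
    (hgeo : GeodesicSpace S) (hhyp : DeltaHyperbolic S δ) : FourPoint S (3 * (δ + 2)) := by
  intro w x y z
  obtain ⟨Γ₁, h₁⟩ := hgeo x z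
  obtain ⟨Γ₂, h₂⟩ := hgeo z y
  obtain ⟨Γ₃, h₃⟩ := hgeo y x
  obtain ⟨p, hp, hd⟩ := exists_mem_dist_le hδ hgeo hhyp w x z h₁
  obtain ⟨q, hq | hq, hpq⟩ := hhyp.exists_near h₁ h₂ h₃ hp
  · have h := gprod_le_of_mem w h₂ hq
    rw [gprod_comm] at h
    have := dist_triangle w p q
    have := min_le_right (gprod w x y) (gprod w y z)
    linarith
  · have h := gprod_le_of_mem w h₃ hq
    rw [gprod_comm] at h
    have := dist_triangle w p q
    have := min_le_left (gprod w x y) (gprod w y z)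
    linarith

theorem FourPoint.le {S : Type*} [MetricSpace S] {D : ℝ} (h : FourPoint S D) {w x y z : S} {r : ℝ}
    (h1 : r ≤ gprod w x y) (h2 : r ≤ gprod w y z) : r - D ≤ gprod w x z := by
  have := h w x y z
  have := le_min h1 h2
  linarith

/-- Points with a large product with `P`, resp. `Q`, have a bounded mutual product whenever `P`
and `Q` do. -/
theorem FourPoint.sep {S : Type*} [MetricSpace S] {D : ℝ} (h : FourPoint S D) (hD : 0 ≤ D)
    {w P Q a b : S} {L T : ℝ}
    (hPQ : gprod w P Q ≤ L) (hT : L + 2 * D < T) (ha : T ≤ gprod w P a) (hb : T ≤ gprod w Q b) :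
    gprod w a b ≤ L + 2 * D := by
  by_contra! hc
  obtain ⟨r, hr1, hr2⟩ := exists_between (lt_min hc hT)
  have hr3 := hr2.trans_le (min_le_left _ _)
  have hr4 := hr2.trans_le (min_le_right _ _)
  have h1 := h.le (r := r) (hr4.le.trans ha) hr3.le
  have h2 := h.le (z := Q) (r := r - D) h1 (by rw [gprod_comm]; linarith)
  linarith

/-! ### Finiteness for fixed points of `S` -/

/-- Elements `g` that move `z` to within `C` of `e` and keep the direction of `P` close to that
of `u` differ from one another by elements displacing `z`, and the point of `[z, P]` at distance
`R` from `z`, by a bounded amount. Acylindricity therefore leaves finitely many of them. -/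
theorem finite_near {G S : Type*} [Group G] [MetricSpace S] {D : ℝ} (hD : 0 ≤ D)
    (h4 : FourPoint S D) (hgeo : GeodesicSpace S)
    {act : G → S → S} (hact : IsIsometricAction act) (e u P z : S) {C T R : ℝ}
    (hR : 0 < R)
    (hfin : ∀ x y : S, R ≤ dist x y → {g : G | dist x (act g x) ≤ 4 * C + 6 * D ∧
      dist y (act g y) ≤ 4 * C + 6 * D}.Finite)
    (hC : 0 < C) (hT : R + C ≤ T) :
    {g : G | dist e (act g z) ≤ C ∧ T ≤ gprod e (act g P) u}.Finite := by
  rcases Set.eq_empty_or_nonempty {g : G | dist e (act g z) ≤ C ∧ T ≤ gprod e (act g P) u}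
    with h0 | ⟨g₀, hg₀⟩
  · rw [h0]; exact Set.finite_empty
  have hzP : R ≤ dist z P := by
    have h1 := hg₀.2.trans (gprod_le_dist _ _ _)
    have h2 := dist_triangle (act g₀ P) (act g₀ z) e
    rw [(hact.2 g₀).dist_eq, dist_comm (act g₀ z) e, dist_comm P z] at h2
    have := hg₀.1
    linarith
  obtain ⟨m, hzm, hmP⟩ : ∃ m, dist z m = R ∧ dist z m + dist m P = dist z P := by
    obtain ⟨Γ, hΓ⟩ := hgeo z P
    have hΓ' := hΓ
    obtain ⟨γ, h0, h1, hi, hΓe⟩ := hΓ'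
    refine ⟨γ R, ?_, hΓ.dist_add (hΓe ▸ ⟨R, ⟨hR.le, hzP⟩, rfl⟩)⟩
    have := hi 0 ⟨le_rfl, dist_nonneg⟩ R ⟨hR.le, hzP⟩
    rwa [h0, zero_sub, abs_neg, abs_of_pos hR] at this
  have key : ∀ g : G, dist e (act g z) ≤ C → T ≤ gprod e (act g P) u →
      R - C - D ≤ gprod e (act g m) u ∧ dist (act g m) e ≤ R + C := by
    intro g h1 h2
    have d1 := (hact.2 g).dist_eq z m
    have d2 := (hact.2 g).dist_eq m P
    have d3 := (hact.2 g).dist_eq z P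
    have t1 := dist_triangle (act g m) (act g z) e
    have t2 := dist_triangle (act g z) e (act g m)
    have t3 := dist_triangle (act g z) e (act g P)
    rw [dist_comm _ e] at t1
    rw [dist_comm (act g m) (act g z), dist_comm (act g z) e] at t1
    rw [dist_comm (act g z) e, dist_comm e (act g m)] at t2
    rw [dist_comm (act g z) e, dist_comm e (act g P)] at t3
    rw [dist_comm e (act g m)] at t1
    refine ⟨h4.le (y := act g P) ?_ (by linarith), by linarith⟩
    simp only [gprod]; linarith
  have hsub : {g : G | dist e (act g z) ≤ C ∧ T ≤ gprod e (act g P) u} ⊆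
      (fun g => g₀⁻¹ * g) ⁻¹' {g : G | dist z (act g z) ≤ 4 * C + 6 * D ∧
        dist m (act g m) ≤ 4 * C + 6 * D} := by
    intro g hg
    have tr : ∀ p : S, dist p (act (g₀⁻¹ * g) p) = dist (act g₀ p) (act g p) := by
      intro p
      rw [← (hact.2 g₀).dist_eq p, ← hact.1.2, mul_inv_cancel_left]
    refine ⟨?_, ?_⟩
    · rw [tr]
      have := dist_triangle (act g₀ z) e (act g z)
      have h1 := hg₀.1
      have h2 := hg.1
      rw [dist_comm e (act g₀ z)] at h1
      linarith
    · rw [tr]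
      obtain ⟨a1, a2⟩ := key g₀ hg₀.1 hg₀.2
      obtain ⟨b1, b2⟩ := key g hg.1 hg.2
      rw [gprod_comm] at b1
      have := h4.le a1 b1
      simp only [gprod] at this
      linarith
  exact ((hfin z m hzm.ge).preimage ((mul_right_injective g₀⁻¹).injOn)).subset hsub

/-- If `gP` is in the direction of `u` and `gR'` in that of `v`, then `e` is close to
`g[P, R']`. Covering the compact segment `[P, R']` by finitely many unit balls reduces finiteness
of the set of such `g` to `finite_near`. -/
theorem finite_pair {G S : Type*} [Group G] [MetricSpace S] {δ D : ℝ} (hδ : 0 ≤ δ) (hD : 0 ≤ D)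
    (h4 : FourPoint S D) (hgeo : GeodesicSpace S) (hhyp : DeltaHyperbolic S δ)
    {act : G → S → S} (hact : IsIsometricAction act) (e u v P R' : S) {K C T R : ℝ}
    (hR : 0 < R)
    (hfin : ∀ x y : S, R ≤ dist x y → {g : G | dist x (act g x) ≤ 4 * C + 6 * D ∧
      dist y (act g y) ≤ 4 * C + 6 * D}.Finite)
    (hC : 0 < C) (hT : R + C ≤ T) (hCK : K + 2 * D + 2 * (δ + 2) + 1 ≤ C)
    (huv : gprod e u v ≤ K) (hTK : K + 2 * D < T) :
    {g : G | T ≤ gprod e (act g P) u ∧ T ≤ gprod e (act g R') v}.Finite := by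
  obtain ⟨Γ, hΓ⟩ := hgeo P R'
  obtain ⟨t, -, htf, hcov⟩ := hΓ.isCompact_isPreconnected.1.finite_cover_balls zero_lt_one
  refine (htf.biUnion (fun z _ =>
    finite_near hD h4 hgeo hact e u P z hR hfin hC hT)).subset ?_
  rintro g ⟨h1, h2⟩
  have hinv : act g (act g⁻¹ e) = e := by rw [← hact.1.2, mul_inv_cancel, hact.1.1]
  obtain ⟨p, hp, hd⟩ := exists_mem_dist_le hδ hgeo hhyp (act g⁻¹ e) P R' hΓ
  rw [← gprod_isometry (hact.2 g), ← (hact.2 g).dist_eq, hinv] at hd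
  have h3 : gprod e (act g P) (act g R') ≤ K + 2 * D :=
    h4.sep hD huv hTK (by rwa [gprod_comm]) (by rwa [gprod_comm])
  obtain ⟨z, hz, hpz⟩ := Set.mem_iUnion₂.1 (hcov hp)
  refine Set.mem_iUnion₂.2 ⟨z, hz, ?_, h1⟩
  have := dist_triangle e (act g p) (act g z)
  rw [(hact.2 g).dist_eq] at this
  have := Metric.mem_ball.1 hpz
  linarith

/-! ### Replacing varying points by fixed ones -/

/-- If, seen from `e'`, the points `a, b` have bounded product and so have `c, d`, while, seen
from `e`, each of `a, b` is separated from each of `c, d`, then `e` and `e'` are close: at least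
one of `a, b` and at least one of `c, d` is not in the direction of `e` seen from `e'`. -/
theorem dist_le_of_four {S : Type*} [MetricSpace S] {D : ℝ} (h4 : FourPoint S D)
    {e e' a b c d : S} {L K : ℝ} (hab : gprod e' a b ≤ L) (hcd : gprod e' c d ≤ L)
    (hac : gprod e a c ≤ K) (had : gprod e a d ≤ K) (hbc : gprod e b c ≤ K)
    (hbd : gprod e b d ≤ K) : dist e e' ≤ K + L + 2 * D := by
  have hgood : ∀ a b : S, gprod e' a b ≤ L →
      gprod e' a e ≤ L + D ∨ gprod e' b e ≤ L + D := by
    intro a b h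
    by_contra! hc
    obtain ⟨h1, h2⟩ := hc
    obtain ⟨r, hr1, hr2⟩ := exists_between (lt_min h1 h2)
    have := h4.le (r := r) (hr2.trans_le (min_le_left _ _)).le
      (by rw [gprod_comm]; exact (hr2.trans_le (min_le_right _ _)).le)
    linarith
  have hswap : ∀ a : S, gprod e a e' = dist e e' - gprod e' a e := by
    intro a
    simp only [gprod, dist_comm e' e]; ring
  have hfin : ∀ a c : S, gprod e' a e ≤ L + D → gprod e' c e ≤ L + D → gprod e a c ≤ K →
      dist e e' ≤ K + L + 2 * D := by
    intro a c h1 h2 h3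
    have := h4.le (w := e) (x := a) (y := e') (z := c) (r := dist e e' - (L + D))
      (by rw [hswap]; linarith) (by rw [gprod_comm, hswap]; linarith)
    linarith
  rcases hgood a b hab with h1 | h1 <;> rcases hgood c d hcd with h2 | h2
  · exact hfin a c h1 h2 hac
  · exact hfin a d h1 h2 had
  · exact hfin b c h1 h2 hbc
  · exact hfin b d h1 h2 hbd

theorem gprod_base_change {S : Type*} [MetricSpace S] (e e' a b : S) :
    gprod e' a b - dist e e' ≤ gprod e a b := by
  have h1 := dist_triangle a e e'
  have h2 := dist_triangle b e e'
  simp only [gprod]; linarith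

/-- The points `a, b, c, d`, which are close to `P, Q, R, Q'` as seen from `e'`, can be traded
for these: `P` is in the direction of `u` and `R` in the direction of `v`, as seen from `e`. -/
theorem replace_points {S : Type*} [MetricSpace S] {D : ℝ} (hD : 0 ≤ D) (h4 : FourPoint S D)
    {e e' a b c d P Q R Q' u v : S} {L L' K T : ℝ}
    (hPQ : gprod e' P Q ≤ L) (hRQ : gprod e' R Q' ≤ L) (huv : gprod e u v ≤ K)
    (hT : K + 2 * D < T) (hL' : L + 2 * D < L') (hL'' : T + K + L + 6 * D ≤ L')
    (ha : L' ≤ gprod e' P a) (hb : L' ≤ gprod e' Q b) (hc : L' ≤ gprod e' R c)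
    (hd : L' ≤ gprod e' Q' d) (hua : T ≤ gprod e u a) (hub : T ≤ gprod e u b)
    (hvc : T ≤ gprod e v c) (hvd : T ≤ gprod e v d) :
    T - D ≤ gprod e P u ∧ T - D ≤ gprod e R v := by
  have hM := dist_le_of_four h4 (h4.sep hD hPQ hL' ha hb) (h4.sep hD hRQ hL' hc hd)
    (h4.sep hD huv hT hua hvc) (h4.sep hD huv hT hua hvd) (h4.sep hD huv hT hub hvc)
    (h4.sep hD huv hT hub hvd)
  have h1 := gprod_base_change e e' P a
  have h2 := gprod_base_change e e' R c
  refine ⟨h4.le (y := a) (by linarith) (by rwa [gprod_comm]),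
    h4.le (y := c) (by linarith) (by rwa [gprod_comm])⟩

/-! ### Boundary points and their neighbourhoods -/

open Filter in
/-- Distinct boundary points, given by sequences, have termwise Gromov products that are
bounded from some index on. -/
theorem exists_sep {S : Type*} [MetricSpace S] {D : ℝ} (hD : 0 ≤ D) (h4 : FourPoint S D) {e : S}
    (s t : BSeq S e)
    (hne : (Quot.mk _ s : GBoundary S e) ≠ Quot.mk _ t) :
    ∃ L : ℝ, 0 ≤ L ∧ ∃ N : ℕ, ∀ n ≥ N, gprod e (s.1 n) (t.1 n) ≤ L := by
  have hnb : ¬ bequiv e s t := fun h => hne (Quot.sound h)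
  rw [bequiv, tendsto_atTop] at hnb
  push Not at hnb
  obtain ⟨k, hk⟩ := hnb
  have e1 := (tendsto_atTop.1 s.2) (k + 2 * D + 1)
  have e2 := (tendsto_atTop.1 t.2) (k + 2 * D + 1)
  obtain ⟨⟨N, N'⟩, hN⟩ := eventually_atTop.1 (e1.and e2)
  obtain ⟨m, hm, hmk⟩ := (frequently_atTop.1 hk) (max N N')
  have hmN := (le_max_left N N').trans hm
  have hmN' := (le_max_right N N').trans hm
  refine ⟨max 0 (k + 2 * D), le_max_left _ _, max N N', fun n hn => ?_⟩
  have hnN := (le_max_left N N').trans hn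
  have hnN' := (le_max_right N N').trans hn
  refine le_max_of_le_right (h4.sep hD hmk.le
    (T := k + 2 * D + 1) (by linarith) (hN (m, n) ⟨hmN, hnN'⟩).1 (hN (m, n) ⟨hmN, hnN'⟩).2)

open Filter in
/-- Boundary points near the limit of `s` are limits of sequences whose product with each far
point of `s` is eventually large. -/
theorem exists_nhd {S : Type*} [MetricSpace S] {D : ℝ} (h4 : FourPoint S D)
    {e : S} {ζ : ℝ} (hζ : VisualParam e ζ) (s : BSeq S e) (T : ℝ) :
    ∃ U : Set (GBoundary S e), @IsOpen _ (bdTopology S e ζ) U ∧ (Quot.mk _ s : GBoundary S e) ∈ U ∧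
      ∃ N : ℕ, ∀ n ≥ N, ∀ t : BSeq S e, (Quot.mk _ t : GBoundary S e) ∈ U →
        ∀ᶠ j in atTop, T ≤ gprod e (s.1 n) (t.1 j) := by
  obtain ⟨hζ0, ⟨-, hzero, -, -⟩, hcomp⟩ := hζ
  -- A nonnegative threshold excludes the junk value `⊥.toReal = 0`.
  set T' : ℝ := max 0 (T + D) with hT'
  refine ⟨{y | rhoChain e ζ (Quot.mk _ s) y < Real.exp (-ζ * T') / 2},
    TopologicalSpace.isOpen_generateFrom_of_mem ⟨_, _, by positivity, rfl⟩, ?_, ?_⟩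
  · have : rhoChain e ζ (Quot.mk _ s) (Quot.mk _ s) = 0 := (hzero _ _).2 rfl
    change rhoChain e ζ (Quot.mk _ s) (Quot.mk _ s) < _
    rw [this]; positivity
  obtain ⟨⟨N, N'⟩, hN⟩ := eventually_atTop.1 ((tendsto_atTop.1 s.2) T')
  refine ⟨N, fun n hn t ht => ?_⟩
  change rhoChain e ζ (Quot.mk _ s) (Quot.mk _ t) < _ at ht
  have h1 : dExp e ζ (Quot.mk _ s) (Quot.mk _ t) < Real.exp (-ζ * T') := by
    have := (hcomp (Quot.mk _ s) (Quot.mk _ t)).1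
    linarith
  have h2 : (T' : EReal) < gprodBB e (Quot.mk _ s) (Quot.mk _ t) := by
    unfold dExp at h1
    split_ifs at h1 with htop
    · rw [htop]; exact EReal.coe_lt_top _
    · have h3 : T' < (gprodBB e (Quot.mk _ s) (Quot.mk _ t)).toReal := by
        have := Real.exp_lt_exp.1 h1
        nlinarith
      have hbot : gprodBB e (Quot.mk _ s) (Quot.mk _ t) ≠ ⊥ := by
        intro hb
        rw [hb, EReal.toReal_bot] at h3
        exact absurd h3 (not_lt.2 (le_max_left _ _))
      rw [← EReal.coe_toReal htop hbot]
      exact EReal.coe_lt_coe_iff.2 h3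
  have h3 : (T' : EReal) < liminf (fun p : ℕ × ℕ => (gprod e (s.1 p.1) (t.1 p.2) : EReal)) atTop :=
    h2.trans_le (sInf_le ⟨s.1, t.1, ⟨s.2, rfl⟩, ⟨t.2, rfl⟩, rfl⟩)
  obtain ⟨⟨M, M'⟩, hM⟩ := eventually_atTop.1 (eventually_lt_of_lt_liminf h3)
  filter_upwards [eventually_ge_atTop M'] with j hj
  -- Compare through a term `s i` with `i` so far out that both tails apply.
  set i := max N' M with hi
  have h4' : T' < gprod e (s.1 i) (t.1 j) :=
    EReal.coe_lt_coe_iff.1 (hM (i, j) ⟨le_max_right _ _, hj⟩)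
  have h5 := h4.le (hN (n, i) ⟨hn, le_max_left _ _⟩) h4'.le
  have := le_max_right 0 (T + D)
  linarith

/-- For an acylindrical isometric action of `G` on a geodesic
`δ`-hyperbolic space, every pair of distinct boundary points satisfies condition (C₃)
for the induced action on the Gromov boundary. -/
theorem statement13 {G S : Type*} [Group G] [MetricSpace S] (δ : ℝ) (hδ : 0 ≤ δ)
    (hgeo : GeodesicSpace S) (hhyp : DeltaHyperbolic S δ)
    {act : G → S → S} (hact : IsIsometricAction act)
    (hacyl : AcylindricalAction act)
    (e : S) (ζ : ℝ) (hζ : VisualParam e ζ)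
    (x y : GBoundary S e) (hxy : x ≠ y) :
    @PairC3 G (GBoundary S e) (bdTopology S e ζ)
      (fun g => bdMap e (act g) (hact.2 g)) x y := by
  set D : ℝ := 3 * (δ + 2) with hDdef
  have hD : 0 ≤ D := by positivity
  have h4 : FourPoint S D := fourPoint_of_hyperbolic hδ hgeo hhyp
  obtain ⟨X, rfl⟩ := Quot.exists_rep x
  obtain ⟨Y, rfl⟩ := Quot.exists_rep y
  obtain ⟨K, hK0, N₀, hK⟩ := exists_sep hD h4 X Y hxy
  set C : ℝ := K + 2 * D + 2 * (δ + 2) + 1 with hCdef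
  have hC : 0 < C := by positivity
  obtain ⟨R, _, hR, _, hacy⟩ := hacyl (4 * C + 6 * D) (by positivity)
  -- `T - D` is the threshold handed to `finite_pair`.
  set T : ℝ := R + C + D with hTdef
  obtain ⟨U, hUo, hxU, N₁, hU⟩ := exists_nhd h4 hζ X T
  obtain ⟨V, hVo, hyV, N₂, hV⟩ := exists_nhd h4 hζ Y T
  set n := max N₀ (max N₁ N₂) with hn
  have huv := hK n (le_max_left _ _)
  replace hU := hU n ((le_max_left _ _).trans (le_max_right _ _))
  replace hV := hV n ((le_max_right _ _).trans (le_max_right _ _))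
  refine ⟨U, V, hUo, hVo, hxU, hyV, ?_⟩
  intro p q r s hpq _ _ _ _ hrs
  obtain ⟨p, rfl⟩ := Quot.exists_rep p
  obtain ⟨q, rfl⟩ := Quot.exists_rep q
  obtain ⟨r, rfl⟩ := Quot.exists_rep r
  obtain ⟨s, rfl⟩ := Quot.exists_rep s
  obtain ⟨L₁, hL₁, M₁, hpqL⟩ := exists_sep hD h4 p q hpq
  obtain ⟨L₂, hL₂, M₂, hrsL⟩ := exists_sep hD h4 r s hrs
  set L := max L₁ L₂ with hL
  have hL0 : 0 ≤ L := hL₁.trans (le_max_left _ _)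
  set L' : ℝ := T + K + L + 6 * D with hL'
  obtain ⟨A, hAo, hpA, n₁, hA⟩ := exists_nhd h4 hζ p L'
  obtain ⟨B, hBo, hqB, n₂, hB⟩ := exists_nhd h4 hζ q L'
  obtain ⟨C', hCo, hrC, n₃, hC'⟩ := exists_nhd h4 hζ r L'
  obtain ⟨E, hEo, hsE, n₄, hE⟩ := exists_nhd h4 hζ s L'
  obtain ⟨m, hm⟩ : ∃ m, M₁ ≤ m ∧ M₂ ≤ m ∧ n₁ ≤ m ∧ n₂ ≤ m ∧ n₃ ≤ m ∧ n₄ ≤ m :=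
    ⟨M₁ + M₂ + n₁ + n₂ + n₃ + n₄, by omega⟩
  obtain ⟨m1, m2, m3, m4, m5, m6⟩ := hm
  refine ⟨A, B, C', E, hAo, hBo, hCo, hEo, hpA, hqB, hrC, hsE, ?_⟩
  refine (finite_pair hδ hD h4 hgeo hhyp hact e (X.1 n) (Y.1 n) (p.1 m) (r.1 m) (K := K) (C := C)
    (T := T - D) (R := R) hR (fun x y h => (hacy x y h).1) hC (by linarith) le_rfl huv
    (by linarith)).subset ?_
  rintro g ⟨⟨_, ⟨a, haA, rfl⟩, haU⟩, ⟨_, ⟨b, hbB, rfl⟩, hbU⟩, ⟨_, ⟨c, hcC, rfl⟩, hcV⟩,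
    ⟨_, ⟨d, hdE, rfl⟩, hdV⟩⟩
  obtain ⟨a, rfl⟩ := Quot.exists_rep a
  obtain ⟨b, rfl⟩ := Quot.exists_rep b
  obtain ⟨c, rfl⟩ := Quot.exists_rep c
  obtain ⟨d, rfl⟩ := Quot.exists_rep d
  obtain ⟨j, ja, jb, jc, jd, ka, kb, kc, kd⟩ := ((hA m m3 a haA).and <|
    (hB m m4 b hbB).and <| (hC' m m5 c hcC).and <| (hE m m6 d hdE).and <|
    (hU ⟨_, a.2.comp (hact.2 g)⟩ haU).and <| (hU ⟨_, b.2.comp (hact.2 g)⟩ hbU).and <|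
    (hV ⟨_, c.2.comp (hact.2 g)⟩ hcV).and (hV ⟨_, d.2.comp (hact.2 g)⟩ hdV)).exists
  rw [← gprod_isometry (hact.2 g)] at ja jb jc jd
  have hPQ := (hpqL m m1).trans (le_max_left L₁ L₂)
  have hRS := (hrsL m m2).trans (le_max_right L₁ L₂)
  rw [← gprod_isometry (hact.2 g)] at hPQ hRS
  exact replace_points hD h4 hPQ hRS huv (by linarith) (by linarith) le_rfl
    ja jb jc jd ka kb kc kd
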